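/- Let X be a sequential topological space that is sequentially Hausdorff, and for a nonempty ω-Scott open set H ⊆ O(X) define r(H) := {U ∈ O(X) | ⋂H ⊆ U}. Then: (a) r(H) is a nonempty ω-Scott open filter of opens; (b) r(r(H)) = r(H); (c) r is sequentially continuous, i.e., if (H_n) converges to H_∞ in the ω-Scott topology on O(O(X)) with all H_n, H_∞ nonempty ω-Scott open, then (r(H_n)) converges to r(H_∞) in that topology. Hence r is a continuous retraction from the nonempty ω-Scott open subsets of O(X) onto a family of nonempty ω-Scott open filters. -/

import Mathlib

/-!
The heart of the matter is that, in a sequential space with unique sequential limits, `⋂ H` is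
sequentially compact for every nonempty ω-Scott open `H` (`isSeqCompact_biInter`). If a sequence
`x` in `⋂ H` has all its subsequential limits in a closed set `S`, then the sets
`{x m | m ≥ n} ∪ S` are closed and decrease to `S`; so if `S` misses some `U ∈ H`, the sets
`U \ ({x m | m ≥ n} ∪ S)` form an increasing sequence of opens with union `U`, and one of them lies
in `H`, although it omits `x n ∈ ⋂ H`. Taking `S = ∅` gives a convergent subsequence, and taking
`S = {y}` with `y` its limit shows `y ∈ ⋂ H`. Sequential compactness implies countable compactness,
which gives (a); (b) is formal.

For (c), if `H n → Hinf` then each `V N = Hinf ∩ ⋂ m ≥ N, H m` is ω-Scott open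
(`omegaScottOpen_tailInter`) and the `V N` increase to `Hinf`. By sequential compactness, any open
`U ⊇ ⋂ Hinf` already contains some `⋂ V N`, so that `r (V N)` increases to `r Hinf`. Thus an ω-Scott
open neighbourhood of `r Hinf` contains some `r (V N)`, hence also all larger `r (H m)`, `m ≥ N`.
-/

open TopologicalSpace Filter Set

/-- A subset `H` of a complete lattice is **ω-Scott open** if it is upward closed and every
nonempty countable directed family `D` whose supremum belongs to `H` meets `H`. -/
def OmegaScottOpen {L : Type*} [CompleteLattice L] (H : Set L) : Prop :=
  (∀ ⦃U V : L⦄, U ∈ H → U ≤ V → V ∈ H) ∧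
  ∀ D : Set L, D.Nonempty → D.Countable → DirectedOn (· ≤ ·) D → sSup D ∈ H →
    (D ∩ H).Nonempty

/-- A subset `H` of a complete lattice is **Scott open** if it is upward closed and every
nonempty directed family `D` whose supremum belongs to `H` meets `H`. -/
def ScottOpen {L : Type*} [CompleteLattice L] (H : Set L) : Prop :=
  (∀ ⦃U V : L⦄, U ∈ H → U ≤ V → V ∈ H) ∧
  ∀ D : Set L, D.Nonempty → DirectedOn (· ≤ ·) D → sSup D ∈ H → (D ∩ H).Nonempty

/-- The ω-Scott topology on a complete lattice: the collection of ω-Scott open sets (these form a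
topology, so it coincides with the topology they generate). -/
def omegaScottTopology (L : Type*) [CompleteLattice L] : TopologicalSpace L :=
  .generateFrom {H | OmegaScottOpen H}

/-- The Scott topology on a complete lattice. -/
def scottTopology' (L : Type*) [CompleteLattice L] : TopologicalSpace L :=
  .generateFrom {H | ScottOpen H}

/-- A set `K` is countably compact if every countable open cover of `K` has a finite subcover. -/
def CountablyCompactSet {X : Type*} [TopologicalSpace X] (K : Set X) : Prop :=
  ∀ C : Set (Set X), C.Countable → (∀ c ∈ C, IsOpen c) → K ⊆ ⋃₀ C →
    ∃ F ⊆ C, F.Finite ∧ K ⊆ ⋃₀ F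

/-- The compact-open topology on the lattice of opens of `X`, generated by the sets
`K^⊆ = {U | K ⊆ U}` for `K` compact. -/
def coTopology (X : Type*) [TopologicalSpace X] : TopologicalSpace (Opens X) :=
  .generateFrom {H | ∃ K : Set X, IsCompact K ∧ H = {U : Opens X | K ⊆ (U : Set X)}}

/-- The countably-compact-open topology on the lattice of opens of `X`. -/
def ccoTopology (X : Type*) [TopologicalSpace X] : TopologicalSpace (Opens X) :=
  .generateFrom
    {H | ∃ K : Set X, CountablyCompactSet K ∧ H = {U : Opens X | K ⊆ (U : Set X)}}

/-- A topological space is sequentially Hausdorff if limits of sequences are unique. -/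
def SeqHausdorff (X : Type*) [TopologicalSpace X] : Prop :=
  ∀ (x : ℕ → X) (a b : X), Tendsto x atTop (nhds a) → Tendsto x atTop (nhds b) → a = b

/-- `OO X` is the lattice of ω-Scott open subsets of `O(X)`, i.e. the opens of `O(X)`. -/
def OO (X : Type*) [TopologicalSpace X] : Type _ := {H : Set (Opens X) // OmegaScottOpen H}

namespace OO

variable {X : Type*} [TopologicalSpace X]

lemma omegaScottOpen_sUnion {S : Set (Set (Opens X))} (hS : ∀ s ∈ S, OmegaScottOpen s) :
    OmegaScottOpen (⋃₀ S) := by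
  constructor
  · rintro U V ⟨s, hs, hU⟩ hUV
    exact ⟨s, hs, (hS s hs).1 hU hUV⟩
  · rintro D hne hcnt hdir hsup
    obtain ⟨s, hs, hU⟩ := hsup
    obtain ⟨d, hdD, hds⟩ := (hS s hs).2 D hne hcnt hdir hU
    exact ⟨d, hdD, s, hs, hds⟩

instance : PartialOrder (OO X) := Subtype.partialOrder _

instance : SupSet (OO X) :=
  ⟨fun s => ⟨⋃₀ (Subtype.val '' s),
    omegaScottOpen_sUnion (by rintro _ ⟨a, _, rfl⟩; exact a.2)⟩⟩

/-- `OO X`, ordered by inclusion, is a complete lattice (suprema are unions). -/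
noncomputable instance : CompleteLattice (OO X) :=
  completeLatticeOfSup _ fun s => by
    constructor
    · intro a ha U hU
      exact ⟨a.1, ⟨a, ha, rfl⟩, hU⟩
    · intro b hb U hU
      obtain ⟨_, ⟨a, ha, rfl⟩, hUa⟩ := hU
      exact hb ha hUa

end OO

/-- `e K` is the collection of open sets containing `K`. -/
def eOpens {X : Type*} [TopologicalSpace X] (K : Set X) : Set (Opens X) :=
  {U : Opens X | K ⊆ (U : Set X)}

lemma exists_upper_of_directedOn {L : Type*} [Preorder L] {D : Set L}
    (hne : D.Nonempty) (hdir : DirectedOn (· ≤ ·) D) (s : Finset L) (hs : ↑s ⊆ D) :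
    ∃ d ∈ D, ∀ U ∈ s, U ≤ d := by
  classical
  induction s using Finset.induction_on with
  | empty => exact ⟨hne.choose, hne.choose_spec, by simp⟩
  | @insert a t ha ih =>
      obtain ⟨d, hd, hdt⟩ := ih (fun x hx => hs (by simp [hx]))
      obtain ⟨e, he, hae, hde⟩ := hdir a (hs (by simp)) d hd
      refine ⟨e, he, ?_⟩
      intro U hU
      rcases Finset.mem_insert.1 hU with rfl | hU
      · exact hae
      · exact (hdt U hU).trans hde

/-- For a countably compact set `K`, the collection `e K` is ω-Scott open. -/
lemma omegaScottOpen_eOpens {X : Type*} [TopologicalSpace X] {K : Set X}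
    (hK : CountablyCompactSet K) : OmegaScottOpen (eOpens K) := by
  classical
  constructor
  · intro U V hU hUV x hx
    exact hUV (hU hx)
  · rintro D hne hcnt hdir hsup
    have hcover : K ⊆ ⋃₀ ((fun U : Opens X => (U : Set X)) '' D) := by
      intro x hx
      have hx' : x ∈ sSup D := hsup hx
      obtain ⟨U, hU, hxU⟩ := Opens.mem_sSup.1 hx'
      exact ⟨(U : Set X), mem_image_of_mem _ hU, hxU⟩
    obtain ⟨F, hFsub, hFfin, hKF⟩ := hK _ (hcnt.image _)
      (by rintro _ ⟨U, _, rfl⟩; exact U.2) hcover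
    obtain ⟨F₀, hF₀D, hF₀⟩ := Set.subset_image_iff.mp hFsub
    have hF₀fin : F₀.Finite :=
      Set.Finite.of_finite_image (hF₀.symm ▸ hFfin) SetLike.coe_injective.injOn
    obtain ⟨d, hd, hdub⟩ := exists_upper_of_directedOn hne hdir hF₀fin.toFinset
      (by simpa using hF₀D)
    refine ⟨d, hd, ?_⟩
    intro x hx
    obtain ⟨c, hcF, hxc⟩ := hKF hx
    rw [← hF₀] at hcF
    obtain ⟨U, hU, rfl⟩ := hcF
    exact hdub U (hF₀fin.mem_toFinset.2 hU) hxc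

/-- `rSet H = {U ∈ O(X) | ⋂ H ⊆ U}`. -/
def rSet {X : Type*} [TopologicalSpace X] (H : Set (Opens X)) : Set (Opens X) :=
  {U : Opens X | (⋂ V ∈ H, (V : Set X)) ⊆ (U : Set X)}

/-! ### Increasing sequences and ω-Scott open sets -/

section OmegaScott

variable {L : Type*} [CompleteLattice L]

lemma OmegaScottOpen.exists_of_monotone {H : Set L} (hH : OmegaScottOpen H) {D : ℕ → L}
    (hD : Monotone D) (hs : (⨆ n, D n) ∈ H) : ∃ n, D n ∈ H := by
  obtain ⟨_, ⟨n, rfl⟩, hn⟩ := hH.2 (range D) (range_nonempty D) (countable_range D)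
    (directedOn_range.2 hD.directed_le) hs
  exact ⟨n, hn⟩

end OmegaScott

/-! ### Sequential compactness of `⋂ H` -/

section Compactness

variable {X : Type*} [TopologicalSpace X]

lemma SeqHausdorff.t1Space [SequentialSpace X] (hX : SeqHausdorff X) : T1Space X := by
  refine ⟨fun a => IsSeqClosed.isClosed ?_⟩
  intro u p hu hp
  have hua : u = fun _ => a := funext hu
  exact (hX u a p (hua ▸ tendsto_const_nhds) hp).symm

lemma isClosed_tail_union [SequentialSpace X] [T1Space X] {x : ℕ → X} {S : Set X}
    (hS : IsClosed S)
    (hlim : ∀ (φ : ℕ → ℕ) (p : X), StrictMono φ → Tendsto (x ∘ φ) atTop (nhds p) → p ∈ S)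
    (n : ℕ) : IsClosed (x '' Ici n ∪ S) := by
  refine IsSeqClosed.isClosed ?_
  intro u p hu hp
  by_cases hfS : ∃ᶠ k in atTop, u k ∈ S
  · exact Or.inr (hS.mem_of_frequently_of_tendsto hfS hp)
  have htail : ∀ k, ∃ m, u k ∉ S → n ≤ m ∧ x m = u k := by
    intro k
    rcases hu k with ⟨m, hm, h⟩ | h
    · exact ⟨m, fun _ => ⟨hm, h⟩⟩
    · exact ⟨0, fun h' => absurd h h'⟩
  choose m hm using htail
  have hev : ∀ᶠ k in atTop, n ≤ m k ∧ x (m k) = u k :=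
    (not_frequently.1 hfS).mono fun k hk => hm k hk
  by_cases hmt : Tendsto m atTop atTop
  · obtain ⟨ψ, hψ, hmψ⟩ := strictMono_subseq_of_tendsto_atTop hmt
    refine Or.inr (hlim _ p hmψ ?_)
    refine (hp.comp hψ.tendsto_atTop).congr' ?_
    exact (hψ.tendsto_atTop.eventually hev).mono fun k hk => hk.2.symm
  -- Otherwise the indices `m k` are infinitely often below some `M`, so `p` lies in a
  -- finite, hence closed, set.
  · rw [tendsto_atTop] at hmt
    push Not at hmt
    obtain ⟨M, hM⟩ := hmt
    have hfin : IsClosed (x '' Icc n M) := ((finite_Icc n M).image x).isClosed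
    have hfreq : ∃ᶠ k in atTop, u k ∈ x '' Icc n M :=
      (hM.and_eventually hev).mono fun k hk =>
        ⟨m k, ⟨hk.2.1, hk.1.le⟩, hk.2.2⟩
    obtain ⟨j, hj, h⟩ := hfin.mem_of_frequently_of_tendsto hfreq hp
    exact Or.inl ⟨j, hj.1, h⟩

/-- A sequence in `⋂ H` cannot have all its subsequential limits in a closed set disjoint from
a member `U` of `H`. -/
lemma false_of_subseq_limits_mem [SequentialSpace X] [T1Space X] {H : Set (Opens X)}
    (hH : OmegaScottOpen H) {U : Opens X} (hU : U ∈ H) {x : ℕ → X}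
    (hx : ∀ n, x n ∈ ⋂ V ∈ H, (V : Set X)) {S : Set X} (hS : IsClosed S)
    (hSU : Disjoint S (U : Set X))
    (hlim : ∀ (φ : ℕ → ℕ) (p : X), StrictMono φ → Tendsto (x ∘ φ) atTop (nhds p) → p ∈ S) :
    False := by
  let D : ℕ → Opens X := fun n =>
    ⟨(U : Set X) \ (x '' Ici n ∪ S), U.2.sdiff (isClosed_tail_union hS hlim n)⟩
  have hD : Monotone D := by
    intro a b hab z hz
    refine ⟨hz.1, fun h => hz.2 ?_⟩
    exact h.imp_left fun h => image_mono (Ici_subset_Ici.2 hab) h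
  have hsup : U ≤ ⨆ n, D n := by
    intro z hz
    have hzS : z ∉ S := fun h => disjoint_left.1 hSU h hz
    by_contra hcon
    -- Otherwise `z` occurs infinitely often in `x`, so it is a subsequential limit.
    have hall : ∀ n, ∃ k, n ≤ k ∧ x k = z := by
      intro n
      by_contra hn
      refine hcon (Opens.mem_iSup.2 ⟨n, hz, ?_⟩)
      rintro (⟨k, hk, h⟩ | h)
      · exact hn ⟨k, hk, h⟩
      · exact hzS h
    obtain ⟨φ, hφ, hφz⟩ := extraction_of_frequently_atTop (frequently_atTop.2 hall)
    refine hzS (hlim φ z hφ ?_)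
    have : x ∘ φ = fun _ => z := funext hφz
    rw [this]
    exact tendsto_const_nhds
  obtain ⟨n, hn⟩ := hH.exists_of_monotone hD (hH.1 hU hsup)
  have hxn : x n ∈ (D n : Set X) := mem_iInter₂.1 (hx n) _ hn
  exact hxn.2 (Or.inl ⟨n, self_mem_Ici, rfl⟩)

theorem isSeqCompact_biInter [SequentialSpace X] (hX : SeqHausdorff X) {H : Set (Opens X)}
    (hH : OmegaScottOpen H) (hne : H.Nonempty) : IsSeqCompact (⋂ V ∈ H, (V : Set X)) := by
  have := hX.t1Space
  intro x hx
  obtain ⟨φ, p, hφ, hp⟩ :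
      ∃ (φ : ℕ → ℕ) (p : X), StrictMono φ ∧ Tendsto (x ∘ φ) atTop (nhds p) := by
    by_contra hcon
    obtain ⟨U, hU⟩ := hne
    exact false_of_subseq_limits_mem hH hU hx isClosed_empty (empty_disjoint _)
      fun φ p hφ hp => hcon ⟨φ, p, hφ, hp⟩
  refine ⟨p, mem_iInter₂.2 fun U hU => ?_, φ, hφ, hp⟩
  by_contra hpU
  refine false_of_subseq_limits_mem hH hU (x := x ∘ φ) (fun n => hx _)
    (isClosed_singleton (x := p)) (disjoint_singleton_left.2 hpU) ?_
  intro ψ q hψ hq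
  exact hX _ q p hq (hp.comp hψ.tendsto_atTop)

lemma IsSeqCompact.countablyCompactSet {K : Set X} (hK : IsSeqCompact K) :
    CountablyCompactSet K := by
  intro C hC hop hcov
  rcases C.eq_empty_or_nonempty with rfl | hCne
  · exact ⟨∅, Subset.rfl, finite_empty, hcov⟩
  obtain ⟨c, rfl⟩ := hC.exists_eq_range hCne
  by_contra hcon
  have hpick : ∀ n : ℕ, ∃ z ∈ K, ∀ i < n, z ∉ c i := by
    intro n
    by_contra hn
    push Not at hn
    refine hcon ⟨c '' Iio n, image_subset_range _ _, (finite_Iio n).image c, ?_⟩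
    intro z hz
    obtain ⟨i, hi, hzi⟩ := hn z hz
    exact ⟨c i, ⟨i, hi, rfl⟩, hzi⟩
  choose x hxK hx using hpick
  obtain ⟨a, haK, φ, hφ, ha⟩ := hK hxK
  obtain ⟨_, ⟨i, rfl⟩, hai⟩ := hcov haK
  obtain ⟨k, hk, hik⟩ := ((ha.eventually ((hop _ ⟨i, rfl⟩).mem_nhds hai)).and
    (eventually_gt_atTop i)).exists
  exact hx (φ k) i (hik.trans_le (hφ.id_le k)) hk

end Compactness

/-! ### The map `r` -/

section Retraction

variable {X : Type*} [TopologicalSpace X]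

lemma omegaScottOpen_rSet [SequentialSpace X] (hX : SeqHausdorff X) {H : Set (Opens X)}
    (hH : OmegaScottOpen H) (hne : H.Nonempty) : OmegaScottOpen (rSet H) :=
  omegaScottOpen_eOpens (isSeqCompact_biInter hX hH hne).countablyCompactSet

lemma subset_rSet (H : Set (Opens X)) : H ⊆ rSet H := fun _ hU => biInter_subset_of_mem hU

lemma rSet_mono {H G : Set (Opens X)} (h : H ⊆ G) : rSet H ⊆ rSet G :=
  fun _ hU => (biInter_subset_biInter_left h).trans hU

lemma rSet_rSet (H : Set (Opens X)) : rSet (rSet H) = rSet H := by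
  refine Subset.antisymm (fun U hU => ?_) (subset_rSet _)
  exact fun z hz => hU (mem_iInter₂.2 fun V hV => hV hz)

/-- The nontrivial half of the fact that `r` preserves unions of increasing sequences of nonempty
ω-Scott open sets. -/
lemma exists_mem_rSet_of_monotone [SequentialSpace X] (hX : SeqHausdorff X)
    {V : ℕ → Set (Opens X)} (hV : ∀ n, OmegaScottOpen (V n)) (hne : ∀ n, (V n).Nonempty)
    (hmono : Monotone V) {U : Opens X} (hU : U ∈ rSet (⋃ n, V n)) : ∃ n, U ∈ rSet (V n) := by
  by_contra hcon
  have hpick : ∀ n, ∃ z ∈ ⋂ W ∈ V n, (W : Set X), z ∉ (U : Set X) := fun n =>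
    not_subset.1 fun h => hcon ⟨n, h⟩
  choose x hx hxU using hpick
  have hx' : ∀ n m, n ≤ m → x m ∈ ⋂ W ∈ V n, (W : Set X) := fun n m h =>
    biInter_subset_biInter_left (hmono h) (hx m)
  obtain ⟨p, -, φ, hφ, hp⟩ := isSeqCompact_biInter hX (hV 0) (hne 0) fun n => hx' 0 n n.zero_le
  have hpU : p ∈ (U : Set X)ᶜ :=
    U.2.isClosed_compl.mem_of_tendsto hp (Eventually.of_forall fun k => hxU (φ k))
  refine hpU (hU (mem_iInter₂.2 fun W hW => ?_))
  obtain ⟨n, hn⟩ := mem_iUnion.1 hW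
  -- The limit `p` lies in the sequentially compact set `⋂ V n`, by uniqueness of limits.
  obtain ⟨q, hq, ψ, hψ, hqlim⟩ := isSeqCompact_biInter hX (hV n) (hne n)
    (x := fun k => x (φ (k + n)))
    fun k => hx' n _ ((Nat.le_add_left n k).trans (hφ.id_le (k + n)))
  have hplim : Tendsto ((fun k => x (φ (k + n))) ∘ ψ) atTop (nhds p) :=
    (hp.comp (tendsto_add_atTop_nat n)).comp hψ.tendsto_atTop
  rw [hX _ p q hplim hqlim]
  exact mem_iInter₂.1 hq W hn

end Retraction

/-! ### Convergence in the ω-Scott topology on `OO X` -/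

section Convergence

variable {X : Type*} [TopologicalSpace X]

lemma omegaScottOpen_eval (U : Opens X) : OmegaScottOpen {G : OO X | U ∈ G.1} := by
  constructor
  · intro G G' hU hle
    exact hle hU
  · rintro D - - - ⟨_, ⟨G, hG, rfl⟩, hU⟩
    exact ⟨G, hG, hU⟩

/-- The set `Hinf ∩ ⋂ m ≥ N, H m`. -/
def tailInter (H : ℕ → OO X) (Hinf : OO X) (N : ℕ) : Set (Opens X) :=
  {U | U ∈ Hinf.1 ∧ ∀ m, N ≤ m → U ∈ (H m).1}

lemma tailInter_mono (H : ℕ → OO X) (Hinf : OO X) : Monotone (tailInter H Hinf) :=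
  fun _ _ hab _ hU => ⟨hU.1, fun m hm => hU.2 m (hab.trans hm)⟩

lemma eventually_mem_of_tendsto {H : ℕ → OO X} {Hinf : OO X}
    (h : Tendsto H atTop (@nhds (OO X) (omegaScottTopology (OO X)) Hinf)) {U : Opens X}
    (hU : U ∈ Hinf.1) : ∃ M, ∀ m, M ≤ m → U ∈ (H m).1 :=
  eventually_atTop.1 <| (TopologicalSpace.tendsto_nhds_generateFrom_iff.1 h) _
    (omegaScottOpen_eval U) hU

lemma iUnion_tailInter {H : ℕ → OO X} {Hinf : OO X}
    (h : Tendsto H atTop (@nhds (OO X) (omegaScottTopology (OO X)) Hinf)) :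
    ⋃ N, tailInter H Hinf N = Hinf.1 := by
  refine Subset.antisymm (iUnion_subset fun N U hU => hU.1) fun U hU => ?_
  obtain ⟨M, hM⟩ := eventually_mem_of_tendsto h hU
  exact mem_iUnion.2 ⟨M, hU, hM⟩

/-- Along a convergent sequence these infinite intersections remain ω-Scott open: a single member
of the directed family lies in `Hinf` and in all but finitely many `H m`, and the remaining
finitely many indices are handled by directedness. -/
lemma omegaScottOpen_tailInter {H : ℕ → OO X} {Hinf : OO X}
    (h : Tendsto H atTop (@nhds (OO X) (omegaScottTopology (OO X)) Hinf)) (N : ℕ) :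
    OmegaScottOpen (tailInter H Hinf N) := by
  classical
  constructor
  · intro U V hU hUV
    exact ⟨Hinf.2.1 hU.1 hUV, fun m hm => (H m).2.1 (hU.2 m hm) hUV⟩
  · intro D hne hcnt hdir hsup
    obtain ⟨d, hdD, hd⟩ := Hinf.2.2 D hne hcnt hdir hsup.1
    obtain ⟨M, hM⟩ := eventually_mem_of_tendsto h hd
    have hpick : ∀ m, ∃ e ∈ D, N ≤ m → e ∈ (H m).1 := by
      intro m
      by_cases hm : N ≤ m
      · obtain ⟨e, heD, he⟩ := (H m).2.2 D hne hcnt hdir (hsup.2 m hm)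
        exact ⟨e, heD, fun _ => he⟩
      · exact ⟨d, hdD, fun h => absurd h hm⟩
    choose e heD he using hpick
    obtain ⟨b, hbD, hb⟩ := exists_upper_of_directedOn hne hdir
      (insert d ((Finset.range M).image e)) (by
        intro z hz
        simp only [Finset.coe_insert, Finset.coe_image, mem_insert_iff, mem_image] at hz
        rcases hz with rfl | ⟨m, -, rfl⟩
        · exact hdD
        · exact heD m)
    have hdb : d ≤ b := hb d (Finset.mem_insert_self _ _)
    refine ⟨b, hbD, Hinf.2.1 hd hdb, fun m hm => ?_⟩
    rcases le_or_gt M m with hMm | hmM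
    · exact (H m).2.1 (hM m hMm) hdb
    · exact (H m).2.1 (he m hm) (hb _ (Finset.mem_insert_of_mem
        (Finset.mem_image_of_mem _ (Finset.mem_range.2 hmM))))

theorem tendsto_rSet [SequentialSpace X] (hX : SeqHausdorff X) (H : ℕ → OO X) (Hinf : OO X)
    (hne : Hinf.1.Nonempty) (hr : ∀ n : ℕ, OmegaScottOpen (rSet (H n).1))
    (hrinf : OmegaScottOpen (rSet Hinf.1))
    (h : Tendsto H atTop (@nhds (OO X) (omegaScottTopology (OO X)) Hinf)) :
    Tendsto (fun n : ℕ => (⟨rSet (H n).1, hr n⟩ : OO X)) atTop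
      (@nhds (OO X) (omegaScottTopology (OO X)) ⟨rSet Hinf.1, hrinf⟩) := by
  refine TopologicalSpace.tendsto_nhds_generateFrom_iff.2 fun W hW hmem => ?_
  obtain ⟨U₀, hU₀⟩ := hne
  obtain ⟨M, hM⟩ := eventually_mem_of_tendsto h hU₀
  -- Shifting by `M` makes all the sets nonempty.
  let V : ℕ → Set (Opens X) := fun n => tailInter H Hinf (n + M)
  have hVmono : Monotone V := fun a b hab => tailInter_mono H Hinf (Nat.add_le_add_right hab M)
  have hVo : ∀ n, OmegaScottOpen (V n) := fun n => omegaScottOpen_tailInter h _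
  have hVne : ∀ n, (V n).Nonempty := fun n =>
    ⟨U₀, hU₀, fun m hm => hM m ((Nat.le_add_left M n).trans hm)⟩
  have hVU : Hinf.1 ⊆ ⋃ n, V n := by
    rw [← iUnion_tailInter h]
    exact iUnion_mono fun n => tailInter_mono H Hinf (Nat.le_add_right n M)
  let R : ℕ → OO X := fun n => ⟨rSet (V n), omegaScottOpen_rSet hX (hVo n) (hVne n)⟩
  have hRmono : Monotone R := fun a b hab => rSet_mono (hVmono hab)
  have hsup : (⟨rSet Hinf.1, hrinf⟩ : OO X) ≤ ⨆ n, R n := by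
    intro U hU
    obtain ⟨n, hn⟩ := exists_mem_rSet_of_monotone hX hVo hVne hVmono (rSet_mono hVU hU)
    exact (le_iSup R n : R n ≤ _) hn
  obtain ⟨n, hn⟩ := hW.exists_of_monotone hRmono (hW.1 hmem hsup)
  filter_upwards [eventually_ge_atTop (n + M)] with m hm
  exact hW.1 hn (rSet_mono fun U hU => hU.2 m hm)

end Convergence

/-- In a sequentially Hausdorff sequential space `X`, for nonempty ω-Scott
open `H ⊆ O(X)` put `r(H) = {U | ⋂ H ⊆ U}`. Then (a) `r(H)` is a nonempty ω-Scott open filter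
of opens; (b) `r(r(H)) = r(H)`; (c) `r` is sequentially continuous for the ω-Scott topology on
`O(O(X))`. Hence `r` is a continuous retraction onto a family of nonempty ω-Scott open
filters. -/
theorem statement17 {X : Type*} [TopologicalSpace X] [SequentialSpace X]
    (hX : SeqHausdorff X) :
    (∀ H : Set (Opens X), OmegaScottOpen H → H.Nonempty →
      ((rSet H).Nonempty ∧ OmegaScottOpen (rSet H) ∧
        (∀ ⦃U V : Opens X⦄, U ∈ rSet H → U ≤ V → V ∈ rSet H) ∧
        (∀ U V : Opens X, U ∈ rSet H → V ∈ rSet H → U ⊓ V ∈ rSet H))) ∧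
    (∀ H : Set (Opens X), OmegaScottOpen H → H.Nonempty → rSet (rSet H) = rSet H) ∧
    (∀ (H : ℕ → OO X) (Hinf : OO X), (∀ n : ℕ, (H n).1.Nonempty) → Hinf.1.Nonempty →
      ∀ (hr : ∀ n : ℕ, OmegaScottOpen (rSet (H n).1)) (hrinf : OmegaScottOpen (rSet Hinf.1)),
      Tendsto H atTop (@nhds (OO X) (omegaScottTopology (OO X)) Hinf) →
      Tendsto (fun n : ℕ => (⟨rSet (H n).1, hr n⟩ : OO X)) atTop
        (@nhds (OO X) (omegaScottTopology (OO X)) ⟨rSet Hinf.1, hrinf⟩)) := by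
  refine ⟨fun H hH hne => ?_, fun H _ _ => rSet_rSet H, fun H Hinf _ hne hr hrinf h =>
    tendsto_rSet hX H Hinf hne hr hrinf h⟩
  have hr := omegaScottOpen_rSet hX hH hne
  exact ⟨hne.mono (subset_rSet H), hr, hr.1, fun U V hU hV => subset_inter hU hV⟩
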